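/- arXiv:2406.19610 — 5 statements merged into one kernel-verified Lean document; each statement's English description precedes it below -/
import Mathlib

section
/- Suppose the weakly homogeneous polynomial f of order m and degree d, given by coefficients a, is an associated polynomial of the scalar sequence s, i.e. the recurrence relations s(m+j) = Σ_{A nonempty, |A| ≤ d} a(A)·∏_{i∈A} s(j+i) hold for all j < M−m. Then there exists a unique inverse x of s relative to f if and only if h(S) = 1, and in that case the unique inverse is x = s(m−1) + g(S). -/
/-!
Evaluating `f = X₀·h + g` on the window with unknown first entry `x` gives `x·h(S) + g(S)`
(`eval_window`), so the inversion relation is the affine equation `s (m-1) = x·h(S) + g(S)`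
over the field with two elements. It has exactly one solution iff the slope `h(S)` is nonzero,
that is, equal to `1`, and the solution is then `s (m-1) - g(S) = s (m-1) + g(S)`.
-/

/-- The decomposition `f = X₀·h + g`, evaluated on the window `(x, s 0, …, s (m-2))`. -/
lemma eval_window (m : ℕ) (hm : 1 ≤ m) (s : ℕ → ZMod 2) (a : Finset (Fin m) → ZMod 2)
    (x : ZMod 2) :
    ∑ A : Finset (Fin m), a A *
        ∏ i ∈ A, (if (i : ℕ) = 0 then x else s ((i : ℕ) - 1)) =
      x * (∑ A ∈ Finset.univ.filter (fun A : Finset (Fin m) => (⟨0, hm⟩ : Fin m) ∈ A),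
        a A * ∏ i ∈ A.erase ⟨0, hm⟩, s ((i : ℕ) - 1)) +
      ∑ A ∈ Finset.univ.filter (fun A : Finset (Fin m) => (⟨0, hm⟩ : Fin m) ∉ A),
        a A * ∏ i ∈ A, s ((i : ℕ) - 1) := by
  rw [← Finset.sum_filter_add_sum_filter_not Finset.univ
    (fun A : Finset (Fin m) => (⟨0, hm⟩ : Fin m) ∈ A), Finset.mul_sum]
  congr 1
  · refine Finset.sum_congr rfl fun A hA => ?_
    rw [← Finset.mul_prod_erase A _ (Finset.mem_filter.mp hA).2, if_pos rfl, mul_left_comm]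
    congr 2
    refine Finset.prod_congr rfl fun i hi => if_neg fun h => ?_
    exact (Finset.mem_erase.mp hi).1 (Fin.ext h)
  · refine Finset.sum_congr rfl fun A hA => ?_
    congr 1
    refine Finset.prod_congr rfl fun i hi => if_neg fun h => ?_
    have h0 : i = ⟨0, hm⟩ := Fin.ext h
    exact (Finset.mem_filter.mp hA).2 (h0 ▸ hi)

/-- An affine equation `c = x·h + g` over the field with two elements. -/
lemma affine_zmod_two : ∀ c h g : ZMod 2,
    ((∃! x : ZMod 2, c = x * h + g) ↔ h = 1) ∧
      (h = 1 → ∀ x : ZMod 2, c = x * h + g ↔ x = c + g) := by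
  unfold ExistsUnique
  decide

/-- For a weakly homogeneous associated polynomial `f = X₀·h + g` of
order `m` and degree `d` (coefficients `a`) of the scalar sequence `s`, a unique
inverse `x` of `s` relative to `f` exists iff `h(S) = 1`, and in that case the
unique inverse is `x = s (m-1) + g(S)`. -/
theorem stmt_0 (M m d : ℕ) (hm : 1 ≤ m) (hmM : m < M) (hd : 1 ≤ d) (hdm : d ≤ m)
    (s : ℕ → ZMod 2) (a : Finset (Fin m) → ZMod 2)
    (hsupp : ∀ A : Finset (Fin m), ¬(A.Nonempty ∧ A.card ≤ d) → a A = 0)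
    (hassoc : ∀ j < M - m,
      s (m + j) = ∑ A : Finset (Fin m), a A * ∏ i ∈ A, s (j + (i : ℕ))) :
    ((∃! x : ZMod 2, s (m - 1) =
        ∑ A : Finset (Fin m), a A *
          ∏ i ∈ A, (if (i : ℕ) = 0 then x else s ((i : ℕ) - 1))) ↔
      (∑ A ∈ Finset.univ.filter (fun A : Finset (Fin m) => (⟨0, hm⟩ : Fin m) ∈ A),
        a A * ∏ i ∈ A.erase ⟨0, hm⟩, s ((i : ℕ) - 1)) = 1) ∧
    ((∑ A ∈ Finset.univ.filter (fun A : Finset (Fin m) => (⟨0, hm⟩ : Fin m) ∈ A),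
        a A * ∏ i ∈ A.erase ⟨0, hm⟩, s ((i : ℕ) - 1)) = 1 →
      ∀ x : ZMod 2,
        (s (m - 1) =
          ∑ A : Finset (Fin m), a A *
            ∏ i ∈ A, (if (i : ℕ) = 0 then x else s ((i : ℕ) - 1))) ↔
        x = s (m - 1) +
          ∑ A ∈ Finset.univ.filter (fun A : Finset (Fin m) => (⟨0, hm⟩ : Fin m) ∉ A),
            a A * ∏ i ∈ A, s ((i : ℕ) - 1)) := by
  simp only [eval_window m hm]
  exact affine_zmod_two _ _ _
end

section
/- Under the reduction hypotheses (invertible E, block form E·B = [H₁₁ H₁₂; 0 H₂₂] with H₁₁ of full row rank, E·t = (s̄₁, s̄₂)), for every b : Fin q₂ → ZMod 2 the following are equivalent: (i) there exists a : Fin q₁ → ZMod 2 with H₁.mulVec a + H₂.mulVec b = s̄ and v ⬝ᵥ a = 1; (ii) H₂₂.mulVec b = s̄₂. That is, the projection onto the b-coordinates of the solution set of the combined system (recurrence relations plus the inversion condition) is exactly the solution set of H₂₂ b = s̄₂. -/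
/-!
Since `E` is invertible, `B (a, b) = t` is equivalent to `(E B) (a, b) = E t`. Read by blocks, the
first equation is the combined system, and the second is `H₁₁ a + H₁₂ b = s₁` together with
`H₂₂ b = s₂`. Full row rank makes `H₁₁` surjective, so the first of these two conditions can be met
for every `b` by a suitable `a`, and only `H₂₂ b = s₂` constrains `b`.
-/

open scoped Matrix

theorem append_eq_elim_comp {R : Type*} {m n : ℕ} (a : Fin m → R) (b : Fin n → R) :
    Fin.append a b = Sum.elim a b ∘ finSumFinEquiv.symm := by
  rw [← Equiv.comp_symm_eq, Equiv.symm_symm]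
  ext i
  cases i <;> simp

/-- Block form of a linear system whose rows and columns are indexed through equivalences with
sum types. -/
theorem reindex_fromBlocks_mulVec_eq_iff {R : Type*} [CommRing R] {k m n : Type*}
    {q₁ q₂ : ℕ} (e : m ⊕ n ≃ k)
    (A : Matrix m (Fin q₁) R) (B : Matrix m (Fin q₂) R)
    (C : Matrix n (Fin q₁) R) (D : Matrix n (Fin q₂) R)
    (a : Fin q₁ → R) (b : Fin q₂ → R) (x : m → R) (y : n → R) :
    Matrix.reindex e finSumFinEquiv (Matrix.fromBlocks A B C D) *ᵥ Fin.append a b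
        = Sum.elim x y ∘ e.symm ↔
      A *ᵥ a + B *ᵥ b = x ∧ C *ᵥ a + D *ᵥ b = y := by
  rw [append_eq_elim_comp, Matrix.reindex_apply, Matrix.submatrix_mulVec_equiv,
    e.symm.surjective.injective_comp_right.eq_iff, Function.comp_assoc, Equiv.symm_symm,
    Equiv.symm_comp_self, Function.comp_id, Matrix.fromBlocks_mulVec, Sum.elim_eq_iff]
  simp

theorem mulVec_surjective_of_rank_eq {K : Type*} [Field K] {m n : ℕ}
    (A : Matrix (Fin m) (Fin n) K) (h : A.rank = m) : Function.Surjective A.mulVec := by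
  have : LinearMap.range A.mulVecLin = ⊤ := by
    apply Submodule.eq_top_of_finrank_eq
    rw [Module.finrank_fin_fun]
    exact h
  exact LinearMap.range_eq_top.mp this

/-- Under the reduction hypotheses (invertible `E`, block form
`E·B = [H₁₁ H₁₂; 0 H₂₂]` with `H₁₁` of full row rank, `E·t = (s̄₁, s̄₂)`),
for every `b` the combined system (recurrences plus the inversion condition)
has a solution with second component `b` iff `H₂₂ b = s̄₂`: the projection of
the solution set onto the `b`-coordinates is the solution set of `H₂₂ b = s̄₂`. -/
theorem stmt_1 (p q₁ q₂ p₁ p₂ : ℕ) (hp : p₁ + p₂ = p + 1)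
    (H₁ : Matrix (Fin p) (Fin q₁) (ZMod 2)) (H₂ : Matrix (Fin p) (Fin q₂) (ZMod 2))
    (v : Fin q₁ → ZMod 2) (sbar : Fin p → ZMod 2)
    (H₁₁ : Matrix (Fin p₁) (Fin q₁) (ZMod 2)) (H₁₂ : Matrix (Fin p₁) (Fin q₂) (ZMod 2))
    (H₂₂ : Matrix (Fin p₂) (Fin q₂) (ZMod 2))
    (s₁ : Fin p₁ → ZMod 2) (s₂ : Fin p₂ → ZMod 2)
    (B : Matrix (Fin (p + 1)) (Fin (q₁ + q₂)) (ZMod 2))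
    (hB : B = Matrix.reindex finSumFinEquiv finSumFinEquiv
      (Matrix.fromBlocks H₁ H₂ (Matrix.of fun (_ : Fin 1) j => v j) 0))
    (t : Fin (p + 1) → ZMod 2)
    (ht : t = Fin.append sbar (fun _ : Fin 1 => (1 : ZMod 2)))
    (E : Matrix (Fin (p + 1)) (Fin (p + 1)) (ZMod 2)) (hE : IsUnit E)
    (hEB : E * B = Matrix.reindex (finSumFinEquiv.trans (finCongr hp)) finSumFinEquiv
      (Matrix.fromBlocks H₁₁ H₁₂ 0 H₂₂))
    (hEt : E.mulVec t = fun i => Fin.append s₁ s₂ ((finCongr hp).symm i))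
    (hrank : H₁₁.rank = p₁) :
    ∀ b : Fin q₂ → ZMod 2,
      (∃ a : Fin q₁ → ZMod 2, H₁.mulVec a + H₂.mulVec b = sbar ∧ v ⬝ᵥ a = 1) ↔
        H₂₂.mulVec b = s₂ := by
  intro b
  have hsys (a : Fin q₁ → ZMod 2) :
      (H₁ *ᵥ a + H₂ *ᵥ b = sbar ∧ v ⬝ᵥ a = 1) ↔ B *ᵥ Fin.append a b = t := by
    rw [hB, ht, append_eq_elim_comp sbar, reindex_fromBlocks_mulVec_eq_iff]
    refine and_congr_right fun _ => ?_
    simp [funext_iff, Matrix.mulVec]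
  have hred (a : Fin q₁ → ZMod 2) :
      B *ᵥ Fin.append a b = t ↔ H₁₁ *ᵥ a + H₁₂ *ᵥ b = s₁ ∧ H₂₂ *ᵥ b = s₂ := by
    have hEt' : E *ᵥ t = Sum.elim s₁ s₂ ∘ (finSumFinEquiv.trans (finCongr hp)).symm := by
      rw [hEt, append_eq_elim_comp]
      rfl
    rw [← (Matrix.mulVec_injective_of_isUnit hE).eq_iff, Matrix.mulVec_mulVec, hEB, hEt',
      reindex_fromBlocks_mulVec_eq_iff, Matrix.zero_mulVec, zero_add]
  simp only [hsys, hred]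
  refine ⟨fun ⟨_, _, h⟩ => h, fun h => ?_⟩
  obtain ⟨a, ha⟩ := mulVec_surjective_of_rank_eq H₁₁ hrank (s₁ - H₁₂ *ᵥ b)
  exact ⟨a, by rw [ha, sub_add_cancel], h⟩
end

section
/- Under the vector-sequence reduction hypotheses (invertible E, block form E·B = [Ĥ₁₁ Ĥ₁₂; 0 Ĥ₂₂] with Ĥ₁₁ of full row rank, E·t = (ŝ₁, ŝ₂)), there exist a : Fin q₁ → ZMod 2 and b : Fin q₂ → ZMod 2 with Ĥ₁.mulVec a + Ĥ₂.mulVec b = ŝ and V.mulVec a equal to the all-ones vector of length n (i.e., a common associated polynomial with a unique inverse for each of the n coordinate sequences exists) if and only if rank Ĥ₂₂ = rank [Ĥ₂₂ | ŝ₂], where [Ĥ₂₂ | ŝ₂] is Ĥ₂₂ augmented with ŝ₂ as an extra column. -/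
open scoped Matrix

/-!
Multiplying the linear system `B (a, b) = t` by the invertible matrix `E` replaces it by the
equivalent system `H₁₁ a + H₁₂ b = s₁`, `H₂₂ b = s₂`. Since `H₁₁` has full row rank, the first
equation can be solved for `a` whatever `b` is, so the system is solvable iff `H₂₂ b = s₂` is, and
this holds iff augmenting `H₂₂` by `s₂` leaves the rank unchanged (`exists_mulVec_eq_iff_rank_snoc`).
-/

theorem snoc_mulVec {K : Type*} [CommRing K] {m k : ℕ} (A : Matrix (Fin m) (Fin k) K)
    (s : Fin m → K) (x : Fin (k + 1) → K) :
    (Matrix.of fun i : Fin m => Fin.snoc (A i) (s i) : Matrix (Fin m) (Fin (k + 1)) K) *ᵥ x =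
      A *ᵥ (fun j => x j.castSucc) + x (Fin.last k) • s := by
  ext i
  simp [Matrix.mulVec, dotProduct, Fin.sum_univ_castSucc, mul_comm]

/-- The Rouché–Capelli criterion. -/
theorem exists_mulVec_eq_iff_rank_snoc {K : Type*} [Field K] {m k : ℕ}
    (A : Matrix (Fin m) (Fin k) K) (s : Fin m → K) :
    (∃ b, A *ᵥ b = s) ↔ A.rank =
      (Matrix.of fun i : Fin m => Fin.snoc (A i) (s i) : Matrix (Fin m) (Fin (k + 1)) K).rank := by
  set A' : Matrix (Fin m) (Fin (k + 1)) K := Matrix.of fun i : Fin m => Fin.snoc (A i) (s i)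
    with hA'
  have hle : LinearMap.range A.mulVecLin ≤ LinearMap.range A'.mulVecLin := by
    rintro _ ⟨b, rfl⟩
    refine ⟨Fin.snoc b 0, ?_⟩
    simp [hA', snoc_mulVec]
  constructor
  · rintro ⟨b, hb⟩
    have hge : LinearMap.range A'.mulVecLin ≤ LinearMap.range A.mulVecLin := by
      rintro _ ⟨x, rfl⟩
      refine ⟨(fun j => x j.castSucc) + x (Fin.last k) • b, ?_⟩
      simp [hA', snoc_mulVec, Matrix.mulVec_add, Matrix.mulVec_smul, hb]
    rw [Matrix.rank, Matrix.rank, le_antisymm hle hge]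
  · intro h
    have heq := Submodule.eq_of_le_of_finrank_eq hle h
    have hs : s ∈ LinearMap.range A'.mulVecLin := by
      refine ⟨Fin.snoc 0 1, ?_⟩
      have h0 : (fun _ : Fin k => (0 : K)) = 0 := rfl
      simp [hA', snoc_mulVec, h0]
    rw [← heq] at hs
    exact hs

theorem mulVec_surjective_of_rank_eq_s5 {K : Type*} [Field K] {m k : ℕ}
    (A : Matrix (Fin m) (Fin k) K) (h : A.rank = m) (y : Fin m → K) : ∃ x, A *ᵥ x = y := by
  have htop : LinearMap.range A.mulVecLin = ⊤ :=
    Submodule.eq_top_of_finrank_eq (by simpa [Matrix.rank] using h)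
  exact LinearMap.range_eq_top.mp htop y

theorem reindex_fromBlocks_mulVec_append {K : Type*} [CommRing K] {r₁ r₂ c₁ c₂ : ℕ}
    (A : Matrix (Fin r₁) (Fin c₁) K) (B : Matrix (Fin r₁) (Fin c₂) K)
    (C : Matrix (Fin r₂) (Fin c₁) K) (D : Matrix (Fin r₂) (Fin c₂) K)
    (a : Fin c₁ → K) (b : Fin c₂ → K) :
    (Matrix.reindex finSumFinEquiv finSumFinEquiv (Matrix.fromBlocks A B C D)) *ᵥ Fin.append a b =
      Fin.append (A *ᵥ a + B *ᵥ b) (C *ᵥ a + D *ᵥ b) := by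
  ext i
  refine Fin.addCases (fun i => ?_) (fun i => ?_) i <;>
    simp [Matrix.mulVec, dotProduct, Fin.sum_univ_add]

theorem append_eq_append_iff {α : Type*} {m k : ℕ} (a a' : Fin m → α) (b b' : Fin k → α) :
    Fin.append a b = Fin.append a' b' ↔ a = a' ∧ b = b' := by
  refine ⟨fun h => ⟨funext fun i => ?_, funext fun i => ?_⟩, fun ⟨h, h'⟩ => by rw [h, h']⟩
  · simpa using congrFun h (Fin.castAdd k i)
  · simpa using congrFun h (Fin.natAdd m i)

/-- Vector-sequence version. Under the reduction hypotheses
(invertible `E`, block form `E·B = [Ĥ₁₁ Ĥ₁₂; 0 Ĥ₂₂]` with `Ĥ₁₁` of full row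
rank, `E·t = (ŝ₁, ŝ₂)`), a common associated polynomial with a unique inverse
for each of the `n` coordinate sequences exists — i.e. there are `a, b` with
`Ĥ₁ a + Ĥ₂ b = ŝ` and `V a = (1,…,1)` — iff `rank Ĥ₂₂ = rank [Ĥ₂₂ | ŝ₂]`. -/
theorem stmt_5 (p n q₁ q₂ p₁ p₂ : ℕ) (hp : p₁ + p₂ = p + n)
    (H₁ : Matrix (Fin p) (Fin q₁) (ZMod 2)) (H₂ : Matrix (Fin p) (Fin q₂) (ZMod 2))
    (V : Matrix (Fin n) (Fin q₁) (ZMod 2)) (shat : Fin p → ZMod 2)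
    (H₁₁ : Matrix (Fin p₁) (Fin q₁) (ZMod 2)) (H₁₂ : Matrix (Fin p₁) (Fin q₂) (ZMod 2))
    (H₂₂ : Matrix (Fin p₂) (Fin q₂) (ZMod 2))
    (s₁ : Fin p₁ → ZMod 2) (s₂ : Fin p₂ → ZMod 2)
    (B : Matrix (Fin (p + n)) (Fin (q₁ + q₂)) (ZMod 2))
    (hB : B = Matrix.reindex finSumFinEquiv finSumFinEquiv
      (Matrix.fromBlocks H₁ H₂ V 0))
    (t : Fin (p + n) → ZMod 2)
    (ht : t = Fin.append shat (fun _ : Fin n => (1 : ZMod 2)))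
    (E : Matrix (Fin (p + n)) (Fin (p + n)) (ZMod 2)) (hE : IsUnit E)
    (hEB : E * B = Matrix.reindex (finSumFinEquiv.trans (finCongr hp)) finSumFinEquiv
      (Matrix.fromBlocks H₁₁ H₁₂ 0 H₂₂))
    (hEt : E.mulVec t = fun i => Fin.append s₁ s₂ ((finCongr hp).symm i))
    (hrank : H₁₁.rank = p₁) :
    (∃ (a : Fin q₁ → ZMod 2) (b : Fin q₂ → ZMod 2),
        H₁.mulVec a + H₂.mulVec b = shat ∧ V.mulVec a = fun _ : Fin n => 1) ↔
      H₂₂.rank = (Matrix.of fun i : Fin p₂ => Fin.snoc (H₂₂ i) (s₂ i) :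
        Matrix (Fin p₂) (Fin (q₂ + 1)) (ZMod 2)).rank := by
  have key (a : Fin q₁ → ZMod 2) (b : Fin q₂ → ZMod 2) :
      (H₁ *ᵥ a + H₂ *ᵥ b = shat ∧ V *ᵥ a = fun _ : Fin n => 1) ↔
        (H₁₁ *ᵥ a + H₁₂ *ᵥ b = s₁ ∧ H₂₂ *ᵥ b = s₂) := by
    have hBt : B *ᵥ Fin.append a b = t ↔
        (H₁ *ᵥ a + H₂ *ᵥ b = shat ∧ V *ᵥ a = fun _ : Fin n => 1) := by
      rw [hB, ht, reindex_fromBlocks_mulVec_append, append_eq_append_iff]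
      simp
    have hcast : (E * B) *ᵥ Fin.append a b =
        Fin.append (H₁₁ *ᵥ a + H₁₂ *ᵥ b) (H₂₂ *ᵥ b) ∘ (finCongr hp).symm := by
      have h := reindex_fromBlocks_mulVec_append H₁₁ H₁₂ 0 H₂₂ a b
      rw [Matrix.zero_mulVec, zero_add] at h
      rw [hEB, ← h]
      rfl
    have hEt' : E *ᵥ t = Fin.append s₁ s₂ ∘ (finCongr hp).symm := hEt
    rw [← hBt, ← (Matrix.mulVec_injective_of_isUnit hE).eq_iff, Matrix.mulVec_mulVec, hcast, hEt',
      (finCongr hp).symm.surjective.injective_comp_right.eq_iff, append_eq_append_iff]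
  simp only [key]
  rw [← exists_mulVec_eq_iff_rank_snoc]
  constructor
  · rintro ⟨_, b, _, hb⟩
    exact ⟨b, hb⟩
  · rintro ⟨b, hb⟩
    obtain ⟨a, ha⟩ := mulVec_surjective_of_rank_eq_s5 H₁₁ hrank (s₁ - H₁₂ *ᵥ b)
    exact ⟨a, b, by rw [ha, sub_add_cancel], hb⟩
end

section
/- Assume the linear system Ĥ₂₂.mulVec b = ŝ₂ over ZMod 2 has at least one solution. Then the vector V_g.mulVec b is the same for all solutions b of this system if and only if rank Ĥ₂₂ equals the rank of the (p₂+n)×q₂ matrix obtained by stacking Ĥ₂₂ on top of V_g. (Consequently, all associated polynomials of the vector sequence determine one common inverse vector exactly under this rank condition.) -/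
/-!
By rank–nullity, the kernel of the stacked matrix, which is `ker H₂₂ ⊓ ker Vg`, has the same
dimension as `ker H₂₂` exactly when the two ranks agree; since one kernel contains the other, this
means `ker H₂₂ ≤ ker Vg`. The solutions of `H₂₂ b = s₂` form a coset of `ker H₂₂`, so `Vg` is
constant on them under the same condition.
-/

open scoped Matrix

theorem mulVec_append_eq_zero_iff {p q n : ℕ} (H : Matrix (Fin p) (Fin q) (ZMod 2))
    (V : Matrix (Fin n) (Fin q) (ZMod 2)) (x : Fin q → ZMod 2) :
    (Matrix.of (Fin.append (fun i : Fin p => H i) (fun i : Fin n => V i)) :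
        Matrix (Fin (p + n)) (Fin q) (ZMod 2)).mulVec x = 0 ↔
      H.mulVec x = 0 ∧ V.mulVec x = 0 := by
  simp only [funext_iff, Fin.forall_fin_add, Matrix.mulVec, Matrix.of_apply,
    Fin.append_left, Fin.append_right, Pi.zero_apply]

theorem rank_eq_iff_ker_eq_of_le {p m q : ℕ} (A : Matrix (Fin p) (Fin q) (ZMod 2))
    (B : Matrix (Fin m) (Fin q) (ZMod 2))
    (h : LinearMap.ker B.mulVecLin ≤ LinearMap.ker A.mulVecLin) :
    A.rank = B.rank ↔ LinearMap.ker B.mulVecLin = LinearMap.ker A.mulVecLin := by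
  have hA := A.mulVecLin.finrank_range_add_finrank_ker
  have hB := B.mulVecLin.finrank_range_add_finrank_ker
  unfold Matrix.rank
  constructor
  · intro hr
    exact Submodule.eq_of_le_of_finrank_eq h (by omega)
  · intro hk
    rw [hk] at hB
    omega

/-- If the system `Ĥ₂₂ b = ŝ₂` over `ZMod 2` is solvable, then the
vector `V_g.mulVec b` is the same for all solutions `b` iff `rank Ĥ₂₂` equals
the rank of the `(p₂+n)×q₂` matrix obtained by stacking `Ĥ₂₂` on top of `V_g`. -/
theorem stmt_6 (p₂ q₂ n : ℕ) (H₂₂ : Matrix (Fin p₂) (Fin q₂) (ZMod 2))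
    (s₂ : Fin p₂ → ZMod 2) (Vg : Matrix (Fin n) (Fin q₂) (ZMod 2))
    (hsol : ∃ b : Fin q₂ → ZMod 2, H₂₂.mulVec b = s₂) :
    (∀ b b' : Fin q₂ → ZMod 2, H₂₂.mulVec b = s₂ → H₂₂.mulVec b' = s₂ →
        Vg.mulVec b = Vg.mulVec b') ↔
      H₂₂.rank = (Matrix.of (Fin.append (fun i : Fin p₂ => H₂₂ i) (fun i : Fin n => Vg i)) :
        Matrix (Fin (p₂ + n)) (Fin q₂) (ZMod 2)).rank := by
  rw [rank_eq_iff_ker_eq_of_le]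
  · obtain ⟨b₀, hb₀⟩ := hsol
    constructor
    · intro h
      ext x
      simp only [LinearMap.mem_ker, Matrix.mulVecLin_apply, mulVec_append_eq_zero_iff]
      refine ⟨fun hx => hx.1, fun hx => ⟨hx, ?_⟩⟩
      -- compare the solutions `b₀ + x` and `b₀`
      have key := h (b₀ + x) b₀ (by rw [Matrix.mulVec_add, hx, hb₀, add_zero]) hb₀
      rwa [Matrix.mulVec_add, add_eq_left] at key
    · intro h b b' hb hb'
      have hx : b - b' ∈ LinearMap.ker H₂₂.mulVecLin := by
        simp [Matrix.mulVec_sub, hb, hb']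
      rw [← h, LinearMap.mem_ker, Matrix.mulVecLin_apply, mulVec_append_eq_zero_iff,
        Matrix.mulVec_sub Vg] at hx
      exact sub_eq_zero.mp hx.2
  · intro x hx
    rw [LinearMap.mem_ker, Matrix.mulVecLin_apply, mulVec_append_eq_zero_iff] at hx
    exact hx.1
end

section
/- Let T = {x : Fin q → ZMod 2 | A.mulVec x = c ∧ v ⬝ᵥ x = 1} be the set of coefficient vectors of associated polynomials determining an inverse. Then: (i) the cardinality of T is at most 2^(q − rank A); (ii) if T is nonempty, its cardinality is at least 2^(q − rank A − 1) (with natural-number subtraction); and (iii) if rank A = q then T has at most one element, i.e., the associated polynomial determining the inverse is unique. -/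
/-!
Fix a solution `x₀ ∈ T` and let `K = ker A`, of dimension `q - rank A` by rank-nullity.
Subtracting `x₀` embeds `T` into `K`, which gives the upper bound, and with it uniqueness when
`rank A = q`. Conversely, adding `x₀` embeds into `T` the kernel of the functional `v ⬝ᵥ ·` on
`K`; the range of that functional is at most one-dimensional, so its kernel has dimension at
least `dim K - 1`, which gives the lower bound.
-/

open scoped Matrix

lemma card_eq_two_pow_finrank (V : Type*) [AddCommGroup V] [Module (ZMod 2) V] [Finite V] :
    Nat.card V = 2 ^ Module.finrank (ZMod 2) V := by
  have := Fintype.ofFinite V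
  rw [Nat.card_eq_fintype_card, Module.card_eq_pow_finrank (K := ZMod 2), ZMod.card]

lemma finrank_ker_mulVecLin {p q : ℕ} (A : Matrix (Fin p) (Fin q) (ZMod 2)) :
    Module.finrank (ZMod 2) (LinearMap.ker A.mulVecLin) = q - A.rank := by
  have h := LinearMap.finrank_range_add_finrank_ker A.mulVecLin
  rw [Module.finrank_fin_fun] at h
  change A.rank + _ = q at h
  omega

lemma finrank_sub_one_le_finrank_ker {V : Type*} [AddCommGroup V] [Module (ZMod 2) V] [Finite V]
    (f : V →ₗ[ZMod 2] ZMod 2) :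
    Module.finrank (ZMod 2) V - 1 ≤ Module.finrank (ZMod 2) (LinearMap.ker f) := by
  have h := LinearMap.finrank_range_add_finrank_ker f
  have h' := Submodule.finrank_le (LinearMap.range f)
  rw [Module.finrank_self] at h'
  omega

/-- For `T = {x | A.mulVec x = c ∧ v ⬝ᵥ x = 1}` (the coefficient
vectors of associated polynomials determining an inverse): (i) `|T| ≤ 2^(q - rank A)`;
(ii) if `T` is nonempty then `|T| ≥ 2^(q - rank A - 1)`; (iii) if `rank A = q`
then `T` has at most one element. -/
theorem stmt_8 (p q : ℕ) (A : Matrix (Fin p) (Fin q) (ZMod 2))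
    (c : Fin p → ZMod 2) (v : Fin q → ZMod 2)
    (T : Set (Fin q → ZMod 2))
    (hT : T = {x : Fin q → ZMod 2 | A.mulVec x = c ∧ v ⬝ᵥ x = 1}) :
    Nat.card T ≤ 2 ^ (q - A.rank) ∧
    (T.Nonempty → 2 ^ (q - A.rank - 1) ≤ Nat.card T) ∧
    (A.rank = q → T.Subsingleton) := by
  have upper : Nat.card T ≤ 2 ^ (q - A.rank) := by
    rcases T.eq_empty_or_nonempty with h | ⟨x₀, hx₀⟩
    · simp [h]
    · rw [← finrank_ker_mulVecLin, ← card_eq_two_pow_finrank]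
      have hmem : ∀ x : T, (x : Fin q → ZMod 2) - x₀ ∈ LinearMap.ker A.mulVecLin := by
        rintro ⟨x, hx⟩
        rw [hT] at hx hx₀
        simp [Matrix.mulVec_sub, hx.1, hx₀.1]
      refine Nat.card_le_card_of_injective
        (fun x : T => (⟨x - x₀, hmem x⟩ : LinearMap.ker A.mulVecLin)) ?_
      intro x y hxy
      exact Subtype.ext (sub_left_injective (congrArg Subtype.val hxy))
  refine ⟨upper, ?_, ?_⟩
  · rintro ⟨x₀, hx₀⟩
    let f : LinearMap.ker A.mulVecLin →ₗ[ZMod 2] ZMod 2 :=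
      (dotProductBilin (ZMod 2) (ZMod 2) v).comp (LinearMap.ker A.mulVecLin).subtype
    have hle := finrank_sub_one_le_finrank_ker f
    rw [finrank_ker_mulVecLin] at hle
    refine (Nat.pow_le_pow_right two_pos hle).trans ?_
    rw [← card_eq_two_pow_finrank]
    have hmem : ∀ k : LinearMap.ker f, x₀ + (k : Fin q → ZMod 2) ∈ T := by
      rintro ⟨⟨k, hk⟩, hfk⟩
      have hk' : A.mulVec k = 0 := hk
      have hv : v ⬝ᵥ k = 0 := hfk
      rw [hT] at hx₀ ⊢
      exact ⟨by simp [Matrix.mulVec_add, hk', hx₀.1], by simp [dotProduct_add, hv, hx₀.2]⟩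
    refine Nat.card_le_card_of_injective (fun k : LinearMap.ker f => (⟨_, hmem k⟩ : T)) ?_
    intro k l hkl
    exact Subtype.ext (Subtype.ext (add_right_injective x₀ (congrArg Subtype.val hkl)))
  · intro hr
    rw [hr, Nat.sub_self, pow_zero, Finite.card_le_one_iff_subsingleton] at upper
    exact Set.subsingleton_coe T |>.mp upper
end
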